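/- Let p, q > 0 and a ∈ ℝ, and let Δ_a be the Laplacian with vertical drift a on Sol(p,q). (i) If a > 0, then every bounded C² function h : ℝ³ → ℝ with Δ_a h = 0 has the form h(x,y,z) = h₂(y,−z), where h₂ : ℝ² → ℝ is a bounded C² function with Δ^{H(q)}_{−a} h₂ = 0. (ii) If a < 0, then every bounded C² function h : ℝ³ → ℝ with Δ_a h = 0 has the form h(x,y,z) = h₁(x,z), where h₁ : ℝ² → ℝ is a bounded C² function with Δ^{H(p)}_a h₁ = 0. -/

import Mathlib

open Real

/-- The Laplacian with vertical drift `a` on `Sol(p,q) ≡ ℝ³`: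
`Δ_a f = (1/2)(e^{2pz} f_xx + e^{−2qz} f_yy + f_zz) + a f_z`. -/
noncomputable def solLap (p q a : ℝ) (f : ℝ × ℝ × ℝ → ℝ) (w : ℝ × ℝ × ℝ) : ℝ :=
  (1/2) * (Real.exp (2*p*w.2.2) * iteratedDeriv 2 (fun t => f (t, w.2.1, w.2.2)) w.1
    + Real.exp (-(2*q*w.2.2)) * iteratedDeriv 2 (fun t => f (w.1, t, w.2.2)) w.2.1
    + iteratedDeriv 2 (fun t => f (w.1, w.2.1, t)) w.2.2)
  + a * deriv (fun t => f (w.1, w.2.1, t)) w.2.2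

/-- The hyperbolic Laplacian with drift `b` on the logarithmic model `H(r) ≡ ℝ²`:
`Δ^{H(r)}_b g = (1/2)(e^{2rz} g_xx + g_zz) + b g_z`. -/
noncomputable def hypLap (r b : ℝ) (g : ℝ × ℝ → ℝ) (w : ℝ × ℝ) : ℝ :=
  (1/2) * (Real.exp (2*r*w.2) * iteratedDeriv 2 (fun t => g (t, w.2)) w.1
    + iteratedDeriv 2 (fun t => g (w.1, t)) w.2)
  + b * deriv (fun t => g (w.1, t)) w.2

/-- Membership in `H⁺(Δ_a, λ)` on `Sol(p,q)`: strictly positive `C²` `λ`-eigenfunction. -/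
def IsSolEigen (p q a lam : ℝ) (h : ℝ × ℝ × ℝ → ℝ) : Prop :=
  ContDiff ℝ 2 h ∧ (∀ w, 0 < h w) ∧ ∀ w, solLap p q a h w = lam * h w

/-- A minimal element of `H⁺(Δ_a, λ)` on `Sol(p,q)`: value `1` at the origin, and any
element of `H⁺(Δ_a, λ)` dominated by it is a constant multiple of it. -/
def IsSolMinimal (p q a lam : ℝ) (h : ℝ × ℝ × ℝ → ℝ) : Prop :=
  IsSolEigen p q a lam h ∧ h (0, 0, 0) = 1 ∧
    ∀ f, IsSolEigen p q a lam f → (∀ w, f w ≤ h w) → ∃ c : ℝ, ∀ w, f w = c * h w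

/-- Membership in `H⁺(Δ^{H(r)}_b, λ)`: strictly positive `C²` `λ`-eigenfunction. -/
def IsHypEigen (r b lam : ℝ) (g : ℝ × ℝ → ℝ) : Prop :=
  ContDiff ℝ 2 g ∧ (∀ w, 0 < g w) ∧ ∀ w, hypLap r b g w = lam * g w

/-- A minimal element of `H⁺(Δ^{H(r)}_b, λ)`. -/
def IsHypMinimal (r b lam : ℝ) (g : ℝ × ℝ → ℝ) : Prop :=
  IsHypEigen r b lam g ∧ g (0, 0) = 1 ∧
    ∀ f, IsHypEigen r b lam f → (∀ w, f w ≤ g w) → ∃ c : ℝ, ∀ w, f w = c * g w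

/-!
Take `a > 0`. It suffices that every bounded harmonic function is even in `x`: translations in `x`
preserve bounded harmonicity, so evenness yields symmetry about every plane `x = m`. The difference
`h(x,y,z) - h(-x,y,z)` vanishes on `x = 0`, and the maximum principle, in Phragmén–Lindelöf form,
makes it nonpositive on `x > 0` because there is a proper strict supersolution there: adding
`(2 / p) log (1 + l x e^{-pz})` to the height `z`, itself a subsolution since `Δ_a z = a`, makes it
a supersolution, while `e^{-az} (A + log (1 + (y e^{qz})²))` takes care of `z → -∞` and `|y| → ∞`.
For `a < 0` use the symmetry `(x, y, z) ↦ (y, x, -z)`, which exchanges `Sol(p,q)` and `Sol(q,p)`.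
-/

open Filter Set Topology

section Calculus

lemma iteratedDeriv_two_eq_of_hasDerivAt {f f' : ℝ → ℝ} {f'' x : ℝ}
    (h : ∀ᶠ t in 𝓝 x, HasDerivAt f (f' t) t) (h' : HasDerivAt f' f'' x) :
    iteratedDeriv 2 f x = f'' := by
  have hderiv : deriv f =ᶠ[𝓝 x] f' := h.mono fun t ht => ht.deriv
  rw [iteratedDeriv_succ, iteratedDeriv_one, hderiv.deriv_eq, h'.deriv]

lemma iteratedDeriv_two_nonpos_of_isLocalMax {f : ℝ → ℝ} {x : ℝ} (h : IsLocalMax f x)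
    (hc : ContinuousAt f x) : iteratedDeriv 2 f x ≤ 0 := by
  rw [iteratedDeriv_succ, iteratedDeriv_one]
  by_contra! hpos
  have hmin : IsLocalMin f x := isLocalMin_of_deriv_deriv_pos hpos h.deriv_eq_zero hc
  have hconst : f =ᶠ[𝓝 x] fun _ => f x := h.and hmin |>.mono fun t ht => le_antisymm ht.1 ht.2
  have hzero : deriv (deriv f) x = 0 := by
    rw [hconst.deriv.deriv_eq, deriv_const', deriv_const]
  exact hpos.ne' hzero

lemma hasDerivAt_exp_mul_comp_mul_exp {F : ℝ → ℝ} {F' b c y z : ℝ}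
    (hF : HasDerivAt F F' (y * exp (c * z))) :
    HasDerivAt (fun t => exp (b * t) * F (y * exp (c * t)))
      (exp (b * z) * (b * F (y * exp (c * z)) + c * (y * exp (c * z)) * F')) z := by
  have hexp (d : ℝ) : HasDerivAt (fun t => exp (d * t)) (exp (d * z) * d) z :=
    (hasDerivAt_const_mul d).exp
  refine ((hexp b).fun_mul (hF.comp z ((hexp c).const_mul y))).congr_deriv ?_
  simp only [Function.comp_apply]
  ring

lemma iteratedDeriv_two_exp_mul_comp_mul_exp {F F' : ℝ → ℝ} {F'' b c y z : ℝ}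
    (hF : ∀ᶠ s in 𝓝 (y * exp (c * z)), HasDerivAt F (F' s) s)
    (hF' : HasDerivAt F' F'' (y * exp (c * z))) :
    iteratedDeriv 2 (fun t => exp (b * t) * F (y * exp (c * t))) z
      = exp (b * z) * (b ^ 2 * F (y * exp (c * z))
        + (2 * b * c + c ^ 2) * (y * exp (c * z)) * F' (y * exp (c * z))
        + c ^ 2 * (y * exp (c * z)) ^ 2 * F'') := by
  have hcont : ContinuousAt (fun t => y * exp (c * t)) z := by fun_prop
  have hfirst := (hcont.eventually hF).mono fun t ht =>
    hasDerivAt_exp_mul_comp_mul_exp (b := b) ht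
  have hinner := (hF.self_of_nhds.const_mul b).fun_add
    (((hasDerivAt_id' _).const_mul c).fun_mul hF')
  rw [iteratedDeriv_two_eq_of_hasDerivAt hfirst (hasDerivAt_exp_mul_comp_mul_exp hinner)]
  ring

end Calculus

section SolLap

variable {p q a : ℝ} {f g : ℝ × ℝ × ℝ → ℝ} {w : ℝ × ℝ × ℝ}

lemma contDiffAt_slice_fst {n : WithTop ℕ∞} (hf : ContDiffAt ℝ n f w) :
    ContDiffAt ℝ n (fun t => f (t, w.2.1, w.2.2)) w.1 :=
  hf.fun_comp w.1 (f := fun t : ℝ => (t, w.2.1, w.2.2)) (by fun_prop)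

lemma contDiffAt_slice_snd {n : WithTop ℕ∞} (hf : ContDiffAt ℝ n f w) :
    ContDiffAt ℝ n (fun t => f (w.1, t, w.2.2)) w.2.1 :=
  hf.fun_comp w.2.1 (f := fun t : ℝ => (w.1, t, w.2.2)) (by fun_prop)

lemma contDiffAt_slice_thd {n : WithTop ℕ∞} (hf : ContDiffAt ℝ n f w) :
    ContDiffAt ℝ n (fun t => f (w.1, w.2.1, t)) w.2.2 :=
  hf.fun_comp w.2.2 (f := fun t : ℝ => (w.1, w.2.1, t)) (by fun_prop)

lemma solLap_add (hf : ContDiffAt ℝ 2 f w) (hg : ContDiffAt ℝ 2 g w) :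
    solLap p q a (fun w => f w + g w) w = solLap p q a f w + solLap p q a g w := by
  simp only [solLap]
  rw [iteratedDeriv_fun_add (contDiffAt_slice_fst hf) (contDiffAt_slice_fst hg),
    iteratedDeriv_fun_add (contDiffAt_slice_snd hf) (contDiffAt_slice_snd hg),
    iteratedDeriv_fun_add (contDiffAt_slice_thd hf) (contDiffAt_slice_thd hg),
    deriv_fun_add ((contDiffAt_slice_thd hf).differentiableAt two_ne_zero)
      ((contDiffAt_slice_thd hg).differentiableAt two_ne_zero)]
  ring

lemma solLap_const_mul (c : ℝ) (w : ℝ × ℝ × ℝ) :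
    solLap p q a (fun w => c * f w) w = c * solLap p q a f w := by
  simp only [solLap, iteratedDeriv_const_mul_field, deriv_const_mul_field]
  ring

lemma solLap_sub (hf : ContDiffAt ℝ 2 f w) (hg : ContDiffAt ℝ 2 g w) :
    solLap p q a (fun w => f w - g w) w = solLap p q a f w - solLap p q a g w := by
  have h := solLap_add (p := p) (q := q) (a := a) hf (contDiffAt_const (c := -1) |>.mul hg)
  rw [solLap_const_mul] at h
  simpa only [neg_one_mul, ← sub_eq_add_neg] using h

lemma solLap_comp_const_add_fst (m : ℝ) (w : ℝ × ℝ × ℝ) :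
    solLap p q a (fun w => f (m + w.1, w.2)) w = solLap p q a f (m + w.1, w.2) := by
  simp only [solLap, iteratedDeriv_comp_const_add 2 (fun t => f (t, w.2.1, w.2.2))]

lemma solLap_comp_neg_fst (w : ℝ × ℝ × ℝ) :
    solLap p q a (fun w => f (-w.1, w.2)) w = solLap p q a f (-w.1, w.2) := by
  simp only [solLap, iteratedDeriv_comp_neg 2 (fun t => f (t, w.2.1, w.2.2)), even_two.neg_one_pow,
    one_smul]

lemma solLap_comp_swap (w : ℝ × ℝ × ℝ) :
    solLap q p (-a) (fun w => f (w.2.1, w.1, -w.2.2)) w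
      = solLap p q a f (w.2.1, w.1, -w.2.2) := by
  simp only [solLap, iteratedDeriv_comp_neg 2 (fun t => f (w.2.1, w.1, t)),
    deriv_comp_neg (fun t => f (w.2.1, w.1, t)), even_two.neg_one_pow, one_smul, mul_neg, neg_neg]
  ring

lemma hypLap_slice {x : ℝ} {u : ℝ × ℝ} (hx : iteratedDeriv 2 (fun t => f (t, u.1, -u.2)) x = 0) :
    hypLap q (-a) (fun u => f (x, u.1, -u.2)) u = solLap p q a f (x, u.1, -u.2) := by
  simp only [hypLap, solLap, hx, iteratedDeriv_comp_neg 2 (fun t => f (x, u.1, t)),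
    deriv_comp_neg (fun t => f (x, u.1, t)), even_two.neg_one_pow, one_smul, mul_neg, neg_neg]
  ring

lemma solLap_height (p q a : ℝ) (w : ℝ × ℝ × ℝ) : solLap p q a (fun w => w.2.2) w = a := by
  simp [solLap, iteratedDeriv_const, iteratedDeriv_fun_id]

lemma solLap_exp_mul_comp_snd {F F' : ℝ → ℝ} {F'' b s : ℝ} (hs : s = w.2.1 * exp (q * w.2.2))
    (hF : ∀ᶠ s in 𝓝 s, HasDerivAt F (F' s) s) (hF' : HasDerivAt F' F'' s) :
    solLap p q a (fun w => exp (b * w.2.2) * F (w.2.1 * exp (q * w.2.2))) w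
      = exp (b * w.2.2) * ((1 / 2) * (1 + q ^ 2 * s ^ 2) * F''
        + (q ^ 2 / 2 + (a + b) * q) * s * F' s + (b ^ 2 / 2 + a * b) * F s) := by
  subst hs
  obtain ⟨x, y, z⟩ := w
  have hcont : ContinuousAt (fun t => t * exp (q * z)) y := by fun_prop
  have hy : ∀ᶠ t in 𝓝 y, HasDerivAt (fun t => F (t * exp (q * z)))
      (F' (t * exp (q * z)) * exp (q * z)) t :=
    (hcont.eventually hF).mono fun t ht => ht.comp t (hasDerivAt_mul_const _)
  have hyy : HasDerivAt (fun t => F' (t * exp (q * z)) * exp (q * z))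
      (F'' * exp (q * z) * exp (q * z)) y :=
    (hF'.comp y (hasDerivAt_mul_const (exp (q * z)))).mul_const _
  have hexp : exp (-(2 * q * z)) * exp (q * z) ^ 2 = 1 := by
    rw [← exp_nat_mul, ← exp_add, exp_eq_one_iff]
    push_cast
    ring
  simp only [solLap, iteratedDeriv_const_mul_field, iteratedDeriv_two_eq_of_hasDerivAt hy hyy,
    iteratedDeriv_two_exp_mul_comp_mul_exp hF hF',
    (hasDerivAt_exp_mul_comp_mul_exp hF.self_of_nhds).deriv, iteratedDeriv_const, two_ne_zero,
    if_false]
  linear_combination (1 / 2) * exp (b * z) * F'' * hexp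

lemma solLap_exp_mul_comp_fst {F F' : ℝ → ℝ} {F'' b s : ℝ} (hs : s = w.1 * exp (-p * w.2.2))
    (hF : ∀ᶠ s in 𝓝 s, HasDerivAt F (F' s) s) (hF' : HasDerivAt F' F'' s) :
    solLap p q a (fun w => exp (b * w.2.2) * F (w.1 * exp (-p * w.2.2))) w
      = exp (b * w.2.2) * ((1 / 2) * (1 + p ^ 2 * s ^ 2) * F''
        + (p ^ 2 / 2 - (a + b) * p) * s * F' s + (b ^ 2 / 2 + a * b) * F s) := by
  have hswap := solLap_comp_swap (p := p) (q := q) (a := a) (w := (w.2.1, w.1, -w.2.2))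
    (f := fun w => exp (b * w.2.2) * F (w.1 * exp (-p * w.2.2)))
  have hsnd := solLap_exp_mul_comp_snd (p := q) (q := p) (a := -a) (b := -b) (F := F)
    (w := (w.2.1, w.1, -w.2.2)) (hs.trans (by simp only [neg_mul, mul_neg])) hF hF'
  simp only [neg_mul, mul_neg, neg_neg] at hswap hsnd ⊢
  rw [← hswap, hsnd]
  ring

end SolLap

section MaximumPrinciple

variable {p q a : ℝ} {f u Φ : ℝ × ℝ × ℝ → ℝ} {w : ℝ × ℝ × ℝ} {U : Set (ℝ × ℝ × ℝ)}

lemma solLap_nonpos_of_isLocalMax (h : IsLocalMax f w) (hf : ContinuousAt f w) :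
    solLap p q a f w ≤ 0 := by
  have hslice {c : ℝ → ℝ × ℝ × ℝ} {t : ℝ} (hc : Continuous c) (hct : c t = w) :
      IsLocalMax (fun t => f (c t)) t ∧ iteratedDeriv 2 (fun t => f (c t)) t ≤ 0 := by
    subst hct
    have hmax : IsLocalMax (f ∘ c) t := h.comp_continuous hc.continuousAt
    exact ⟨hmax, iteratedDeriv_two_nonpos_of_isLocalMax hmax (hf.comp hc.continuousAt)⟩
  have hxx := (hslice (c := fun t => (t, w.2.1, w.2.2)) (t := w.1) (by fun_prop) rfl).2
  have hyy := (hslice (c := fun t => (w.1, t, w.2.2)) (t := w.2.1) (by fun_prop) rfl).2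
  obtain ⟨hz, hzz⟩ := hslice (c := fun t => (w.1, w.2.1, t)) (t := w.2.2) (by fun_prop) rfl
  simp only [solLap, hz.deriv_eq_zero]
  linarith [mul_nonpos_of_nonneg_of_nonpos (exp_pos (2 * p * w.2.2)).le hxx,
    mul_nonpos_of_nonneg_of_nonpos (exp_pos (-(2 * q * w.2.2))).le hyy]

lemma le_of_solLap_lt (hU : IsOpen U) (hu : ContinuousOn u (closure U))
    (hu₂ : ∀ w ∈ U, ContDiffAt ℝ 2 u w) (hΦ : ContinuousOn Φ (closure U))
    (hΦ₂ : ∀ w ∈ U, ContDiffAt ℝ 2 Φ w)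
    (hlap : ∀ w ∈ U, solLap p q a Φ w < solLap p q a u w)
    (hbdry : ∀ w ∈ frontier U, u w ≤ Φ w)
    (hlim : Tendsto (fun w => Φ w - u w) (cocompact _ ⊓ 𝓟 (closure U)) atTop) (hw : w ∈ U) :
    u w ≤ Φ w := by
  by_contra! hlt
  have hfar : ∀ᶠ v in cocompact _ ⊓ 𝓟 (closure U), u v - Φ v ≤ u w - Φ w :=
    (hlim.eventually_ge_atTop (Φ w - u w)).mono fun v hv => by linarith
  obtain ⟨m, hm, hmax⟩ := (hu.fun_sub hΦ).exists_isMaxOn' isClosed_closure (subset_closure hw) hfar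
  have hpos : 0 < u m - Φ m := (sub_pos.2 hlt).trans_le (hmax (subset_closure hw))
  have hmU : m ∈ U := by
    by_contra hmU
    linarith [hbdry m (hU.frontier_eq ▸ ⟨hm, hmU⟩)]
  have hloc := hmax.isLocalMax (mem_of_superset (hU.mem_nhds hmU) subset_closure)
  have hle := solLap_nonpos_of_isLocalMax (p := p) (q := q) (a := a) hloc
    ((hu₂ m hmU).continuousAt.sub (hΦ₂ m hmU).continuousAt)
  linarith [solLap_sub (p := p) (q := q) (a := a) (hu₂ m hmU) (hΦ₂ m hmU), hlap m hmU]

lemma nonpos_of_proper_supersolution (hU : IsOpen U) (hΦ : ContinuousOn Φ (closure U))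
    (hΦ₂ : ∀ w ∈ U, ContDiffAt ℝ 2 Φ w) (hΦ_lap : ∀ w ∈ U, solLap p q a Φ w < 0)
    (hΦ_bdry : ∀ w ∈ frontier U, 0 ≤ Φ w)
    (hΦ_lim : Tendsto Φ (cocompact _ ⊓ 𝓟 (closure U)) atTop)
    (hu : ContinuousOn u (closure U)) (hu₂ : ∀ w ∈ U, ContDiffAt ℝ 2 u w)
    (hu_lap : ∀ w ∈ U, 0 ≤ solLap p q a u w) (hu_bdry : ∀ w ∈ frontier U, u w ≤ 0)
    {B : ℝ} (hB : ∀ w ∈ closure U, u w ≤ B) (hw : w ∈ U) : u w ≤ 0 := by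
  have hle : ∀ ε > 0, u w ≤ ε * Φ w := fun ε hε => by
    refine le_of_solLap_lt (p := p) (q := q) (a := a) (Φ := fun w => ε * Φ w) hU hu hu₂
      (continuousOn_const.mul hΦ)
      (fun v hv => contDiffAt_const.mul (hΦ₂ v hv)) (fun v hv => ?_)
      (fun v hv => (hu_bdry v hv).trans (mul_nonneg hε.le (hΦ_bdry v hv))) ?_ hw
    · rw [solLap_const_mul]
      exact (mul_neg_of_pos_of_neg hε (hΦ_lap v hv)).trans_le (hu_lap v hv)
    · exact tendsto_atTop_mono' _
        (eventually_inf_principal.2 (Eventually.of_forall fun v hv => sub_le_sub_left (hB v hv) _))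
        (tendsto_atTop_add_const_right _ (-B) (hΦ_lim.const_mul_atTop hε))
  have hlim : Tendsto (fun ε => ε * Φ w) (𝓝[>] 0) (𝓝 0) := by
    simpa only [zero_mul] using
      ((continuous_mul_const (Φ w)).tendsto 0).mono_left nhdsWithin_le_nhds
  exact ge_of_tendsto hlim (eventually_of_mem self_mem_nhdsWithin hle)

end MaximumPrinciple

section Barrier

variable {p q a l A K : ℝ} {w : ℝ × ℝ × ℝ}

/-- The supersolution used on the half-space `x > 0` when the drift `a` is positive. The parameters
`l` and `A` only have to be large. -/
noncomputable def solBarrier (p q a l A : ℝ) (w : ℝ × ℝ × ℝ) : ℝ :=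
  w.2.2 + 2 / p * log (1 + l * (w.1 * exp (-p * w.2.2)))
    + exp (-a * w.2.2) * (A + log (1 + (w.2.1 * exp (q * w.2.2)) ^ 2))

lemma contDiffAt_log_one_add_mul_exp (hl : 0 ≤ l) (hw : 0 ≤ w.1) :
    ContDiffAt ℝ 2 (fun w : ℝ × ℝ × ℝ => log (1 + l * (w.1 * exp (-p * w.2.2)))) w :=
  ContDiffAt.log (by fun_prop) (by positivity)

lemma contDiff_exp_mul_log_one_add_sq (q a A : ℝ) :
    ContDiff ℝ 2 fun w : ℝ × ℝ × ℝ =>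
      exp (-a * w.2.2) * (A + log (1 + (w.2.1 * exp (q * w.2.2)) ^ 2)) :=
  ContDiff.mul (by fun_prop)
    (contDiff_const.add (ContDiff.log (by fun_prop) fun w => by positivity))

lemma contDiffAt_solBarrier (hl : 0 ≤ l) (hw : 0 ≤ w.1) :
    ContDiffAt ℝ 2 (solBarrier p q a l A) w :=
  (ContDiffAt.add (by fun_prop)
    (contDiffAt_const.mul (contDiffAt_log_one_add_mul_exp hl hw))).add
    (contDiff_exp_mul_log_one_add_sq q a A).contDiffAt

lemma solLap_log_one_add_mul_exp (hl : 0 ≤ l) (hw : 0 ≤ w.1) {s : ℝ}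
    (hs : s = w.1 * exp (-p * w.2.2)) :
    solLap p q a (fun w => log (1 + l * (w.1 * exp (-p * w.2.2)))) w
      = -((1 / 2) * (1 + p ^ 2 * s ^ 2) * (l / (1 + l * s)) ^ 2)
        + (p ^ 2 / 2 - a * p) * s * (l / (1 + l * s)) := by
  have hpos : 0 < 1 + l * s := by
    subst hs
    positivity
  have hlin (t : ℝ) : HasDerivAt (fun t => 1 + l * t) l t := (hasDerivAt_const_mul l).const_add 1
  have hF : ∀ᶠ t in 𝓝 s, HasDerivAt (fun t => log (1 + l * t)) (l / (1 + l * t)) t := by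
    filter_upwards [(hlin s).continuousAt.eventually_ne hpos.ne'] with t ht using (hlin t).log ht
  have hF' : HasDerivAt (fun t => l / (1 + l * t)) (-(l / (1 + l * s)) ^ 2) s :=
    ((hasDerivAt_const s l).fun_div (hlin s) hpos.ne').congr_deriv (by rw [div_pow]; ring)
  have h := solLap_exp_mul_comp_fst (q := q) (a := a) (b := 0) hs hF hF'
  simp only [zero_mul, exp_zero, one_mul] at h
  rw [h]
  ring

lemma solLap_height_add_log_nonpos (hp : 0 < p) (ha : 0 < a) (hl : 0 ≤ l)
    (hl₂ : p * (a + p ^ 2 / (4 * a)) ≤ l ^ 2) (hw : 0 ≤ w.1) :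
    solLap p q a (fun w => w.2.2 + 2 / p * log (1 + l * (w.1 * exp (-p * w.2.2)))) w ≤ 0 := by
  rw [solLap_add (by fun_prop) (contDiffAt_const.mul (contDiffAt_log_one_add_mul_exp hl hw)),
    solLap_height, solLap_const_mul, solLap_log_one_add_mul_exp hl hw rfl]
  set s := w.1 * exp (-p * w.2.2)
  have hs : 0 ≤ s := by positivity
  have hsquare : a + 2 / p * (-((1 / 2) * (1 + p ^ 2 * s ^ 2) * (l / (1 + l * s)) ^ 2)
        + (p ^ 2 / 2 - a * p) * s * (l / (1 + l * s)))
      = ((p * (a + p ^ 2 / (4 * a)) - l ^ 2) / p - a * (l * s - p / (2 * a)) ^ 2)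
        / (1 + l * s) ^ 2 := by
    field_simp
    ring
  rw [hsquare]
  have hdefect : (p * (a + p ^ 2 / (4 * a)) - l ^ 2) / p ≤ 0 :=
    div_nonpos_of_nonpos_of_nonneg (sub_nonpos.2 hl₂) hp.le
  exact div_nonpos_of_nonpos_of_nonneg
    (sub_nonpos.2 (hdefect.trans (by positivity))) (by positivity)

lemma solLap_exp_mul_log_one_add_sq {s : ℝ} (hs : s = w.2.1 * exp (q * w.2.2)) :
    solLap p q a (fun w => exp (-a * w.2.2) * (A + log (1 + (w.2.1 * exp (q * w.2.2)) ^ 2))) w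
      = exp (-a * w.2.2) / 2 * ((2 - 2 * s ^ 2 + 4 * q ^ 2 * s ^ 2) / (1 + s ^ 2) ^ 2
        - a ^ 2 * (A + log (1 + s ^ 2))) := by
  have hpos (t : ℝ) : 1 + t ^ 2 ≠ 0 := by positivity
  have hsq (t : ℝ) : HasDerivAt (fun t => 1 + t ^ 2) (2 * t) t := by
    simpa using (hasDerivAt_pow 2 t).const_add 1
  have hF (t : ℝ) : HasDerivAt (fun t => A + log (1 + t ^ 2)) (2 * t / (1 + t ^ 2)) t :=
    ((hsq t).log (hpos t)).const_add A
  have hF' : HasDerivAt (fun t => 2 * t / (1 + t ^ 2)) ((2 - 2 * s ^ 2) / (1 + s ^ 2) ^ 2) s :=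
    ((hasDerivAt_const_mul 2).fun_div (hsq s) (hpos s)).congr_deriv (by ring)
  rw [solLap_exp_mul_comp_snd (F := fun t => A + log (1 + t ^ 2)) hs (Eventually.of_forall hF) hF']
  have := hpos s
  field_simp
  ring

lemma solLap_exp_mul_log_one_add_sq_neg (hA : 2 + 4 * q ^ 2 < a ^ 2 * A) :
    solLap p q a (fun w => exp (-a * w.2.2) * (A + log (1 + (w.2.1 * exp (q * w.2.2)) ^ 2))) w
      < 0 := by
  rw [solLap_exp_mul_log_one_add_sq rfl]
  set s := w.2.1 * exp (q * w.2.2)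
  have hquot : (2 - 2 * s ^ 2 + 4 * q ^ 2 * s ^ 2) / (1 + s ^ 2) ^ 2 ≤ 2 + 4 * q ^ 2 := by
    rw [div_le_iff₀ (by positivity)]
    have h₁ : 0 ≤ q ^ 2 * (1 + s ^ 2 + s ^ 4) := by positivity
    have h₂ : 0 ≤ 3 * s ^ 2 + s ^ 4 := by positivity
    linarith
  have hlog : 0 ≤ a ^ 2 * log (1 + s ^ 2) :=
    mul_nonneg (sq_nonneg a) (log_nonneg (le_add_of_nonneg_right (sq_nonneg s)))
  exact mul_neg_of_pos_of_neg (by positivity) (by linarith)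

lemma solLap_solBarrier_neg (hp : 0 < p) (ha : 0 < a) (hl : 0 ≤ l)
    (hl₂ : p * (a + p ^ 2 / (4 * a)) ≤ l ^ 2) (hA : 2 + 4 * q ^ 2 < a ^ 2 * A) (hw : 0 ≤ w.1) :
    solLap p q a (solBarrier p q a l A) w < 0 :=
  (solLap_add (ContDiffAt.add (by fun_prop)
    (contDiffAt_const.mul (contDiffAt_log_one_add_mul_exp hl hw)))
    (contDiff_exp_mul_log_one_add_sq q a A).contDiffAt).trans_lt
    (add_neg_of_nonpos_of_neg (solLap_height_add_log_nonpos hp ha hl hl₂ hw)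
      (solLap_exp_mul_log_one_add_sq_neg hA))

lemma add_exp_neg_mul_div_nonneg (ha : 0 < a) (z : ℝ) : 0 ≤ z + exp (-a * z) / a := by
  have hsum : z + exp (-a * z) / a = (a * z + exp (-a * z)) / a := by field_simp
  rw [hsum]
  exact div_nonneg (by linarith [add_one_le_exp (-a * z)]) ha.le

lemma solBarrier_terms_le (hp : 0 < p) (ha : 0 < a) (hl : 0 ≤ l) (hA : 1 / a ≤ A) (hw : 0 ≤ w.1)
    (hK : solBarrier p q a l A w ≤ K) :
    w.2.2 ≤ K ∧ exp (-a * w.2.2) * (A - 1 / a) ≤ K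
      ∧ 2 / p * log (1 + l * (w.1 * exp (-p * w.2.2))) ≤ K
      ∧ exp (-a * w.2.2) * log (1 + (w.2.1 * exp (q * w.2.2)) ^ 2) ≤ K := by
  have hz := add_exp_neg_mul_div_nonneg ha w.2.2
  have ha' : 0 ≤ exp (-a * w.2.2) / a := by positivity
  have hA' : 0 ≤ exp (-a * w.2.2) * (A - 1 / a) :=
    mul_nonneg (exp_pos _).le (sub_nonneg.2 hA)
  have hx : 0 ≤ 2 / p * log (1 + l * (w.1 * exp (-p * w.2.2))) :=
    mul_nonneg (by positivity) (log_nonneg (le_add_of_nonneg_right (by positivity)))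
  have hy : 0 ≤ exp (-a * w.2.2) * log (1 + (w.2.1 * exp (q * w.2.2)) ^ 2) :=
    mul_nonneg (exp_pos _).le (log_nonneg (le_add_of_nonneg_right (by positivity)))
  have hsplit : solBarrier p q a l A w = (w.2.2 + exp (-a * w.2.2) / a)
      + exp (-a * w.2.2) * (A - 1 / a) + 2 / p * log (1 + l * (w.1 * exp (-p * w.2.2)))
      + exp (-a * w.2.2) * log (1 + (w.2.1 * exp (q * w.2.2)) ^ 2) := by
    unfold solBarrier
    ring
  refine ⟨?_, ?_, ?_, ?_⟩ <;> linarith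

lemma solBarrier_nonneg (hp : 0 < p) (ha : 0 < a) (hl : 0 ≤ l) (hA : 1 / a ≤ A) (hw : 0 ≤ w.1) :
    0 ≤ solBarrier p q a l A w :=
  (mul_nonneg (exp_pos _).le (sub_nonneg.2 hA)).trans
    (solBarrier_terms_le hp ha hl hA hw le_rfl).2.1

lemma exists_abs_height_le_of_solBarrier_le (hp : 0 < p) (ha : 0 < a) (hl : 0 ≤ l) (hA : 1 / a < A)
    (K : ℝ) :
    ∃ R, ∀ w : ℝ × ℝ × ℝ, 0 ≤ w.1 → solBarrier p q a l A w ≤ K → |w.2.2| ≤ R := by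
  refine ⟨max K (K / (A - 1 / a) / a), fun w hw hK => abs_le'.2 ⟨?_, ?_⟩⟩
  · exact le_max_of_le_left (solBarrier_terms_le hp ha hl hA.le hw hK).1
  · have hexp : exp (-a * w.2.2) ≤ K / (A - 1 / a) :=
      (le_div_iff₀ (sub_pos.2 hA)).2 (solBarrier_terms_le hp ha hl hA.le hw hK).2.1
    refine le_max_of_le_right ((le_div_iff₀ ha).2 ?_)
    linarith [add_one_le_exp (-a * w.2.2)]

lemma abs_le_of_abs_mul_exp_le {y c z R T : ℝ} (hz : |z| ≤ R) (hT : |y * exp (c * z)| ≤ T) :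
    |y| ≤ T * exp (|c| * R) := by
  have hexp : -(c * z) ≤ |c| * R :=
    (neg_le_abs _).trans (abs_mul c z ▸ mul_le_mul_of_nonneg_left hz (abs_nonneg c))
  calc |y| = |y * exp (c * z)| * exp (-(c * z)) := by
        rw [abs_mul, abs_exp, mul_assoc, ← exp_add, add_neg_cancel, exp_zero, mul_one]
    _ ≤ T * exp (|c| * R) :=
        mul_le_mul hT (exp_le_exp.2 hexp) (exp_pos _).le ((abs_nonneg _).trans hT)

lemma le_exp_div_of_log_one_add_mul_le {s T : ℝ} (hl : 0 < l) (hs : 0 ≤ s)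
    (h : log (1 + l * s) ≤ T) : s ≤ exp T / l := by
  rw [log_le_iff_le_exp (by positivity)] at h
  rw [le_div_iff₀ hl]
  linarith

lemma abs_le_exp_of_log_one_add_sq_le {s T : ℝ} (h : log (1 + s ^ 2) ≤ T) : |s| ≤ exp T := by
  rw [log_le_iff_le_exp (by positivity)] at h
  nlinarith [sq_abs s, sq_nonneg (|s| - 1 / 2)]

lemma exists_norm_le_of_solBarrier_le (hp : 0 < p) (ha : 0 < a) (hl : 0 < l) (hA : 1 / a < A)
    (K : ℝ) :
    ∃ R, ∀ w : ℝ × ℝ × ℝ, 0 ≤ w.1 → solBarrier p q a l A w ≤ K → ‖w‖ ≤ R := by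
  obtain ⟨Z, hZ⟩ := exists_abs_height_le_of_solBarrier_le (q := q) hp ha hl.le hA K
  refine ⟨max (exp (K * (p / 2)) / l * exp (|-p| * Z))
    (max (exp (K * exp (|-a| * Z)) * exp (|q| * Z)) Z), fun w hw hK => ?_⟩
  have hz : |w.2.2| ≤ Z := hZ w hw hK
  obtain ⟨-, -, hKx, hKy⟩ := solBarrier_terms_le hp ha hl.le hA.le hw hK
  have hs : 0 ≤ w.1 * exp (-p * w.2.2) := by positivity
  have hlogx : log (1 + l * (w.1 * exp (-p * w.2.2))) ≤ K * (p / 2) := by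
    rwa [← div_le_iff₀ (by positivity), div_eq_inv_mul, inv_div]
  have hlogy : log (1 + (w.2.1 * exp (q * w.2.2)) ^ 2) ≤ K * exp (|-a| * Z) := by
    refine (le_abs_self _).trans (abs_le_of_abs_mul_exp_le (c := -a) hz ?_)
    rwa [mul_comm, abs_of_nonneg (mul_nonneg (exp_pos _).le
      (log_nonneg (le_add_of_nonneg_right (sq_nonneg _))))]
  simp only [Prod.norm_def, norm_eq_abs]
  refine max_le_max (abs_le_of_abs_mul_exp_le hz ?_)
    (max_le_max (abs_le_of_abs_mul_exp_le hz (abs_le_exp_of_log_one_add_sq_le hlogy)) hz)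
  exact (abs_of_nonneg hs).trans_le (le_exp_div_of_log_one_add_mul_le hl hs hlogx)

lemma tendsto_solBarrier_cocompact (hp : 0 < p) (ha : 0 < a) (hl : 0 < l) (hA : 1 / a < A) :
    Tendsto (solBarrier p q a l A) (cocompact _ ⊓ 𝓟 (Ici 0 ×ˢ univ)) atTop := by
  refine tendsto_atTop.2 fun K => eventually_inf_principal.2 ?_
  obtain ⟨R, hR⟩ := exists_norm_le_of_solBarrier_le (q := q) hp ha hl hA K
  filter_upwards [(tendsto_norm_cocompact_atTop (E := ℝ × ℝ × ℝ)).eventually_gt_atTop R]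
    with w hRw hw
  by_contra! hK
  exact (hR w hw.1 hK.le).not_gt hRw

end Barrier

lemma nonpos_of_solLap_nonneg_of_halfSpace {p q a : ℝ} (hp : 0 < p) (ha : 0 < a)
    {u : ℝ × ℝ × ℝ → ℝ} (hu : ContDiff ℝ 2 u) (hlap : ∀ w, 0 ≤ solLap p q a u w)
    (hbdry : ∀ v, u (0, v) ≤ 0) {B : ℝ} (hB : ∀ w, u w ≤ B) {w : ℝ × ℝ × ℝ} (hw : 0 < w.1) :
    u w ≤ 0 := by
  obtain ⟨l, hl₂, hl⟩ := ((tendsto_pow_atTop two_ne_zero).eventually_ge_atTop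
    (p * (a + p ^ 2 / (4 * a)))).and (eventually_gt_atTop 0) |>.exists
  obtain ⟨A, hA₂, hA⟩ := ((tendsto_id.const_mul_atTop (pow_pos ha 2)).eventually_gt_atTop
    (2 + 4 * q ^ 2)).and (eventually_gt_atTop (1 / a)) |>.exists
  have hclosure : closure (Ioi (0 : ℝ) ×ˢ (univ : Set (ℝ × ℝ))) = Ici 0 ×ˢ univ := by
    rw [closure_prod_eq, closure_Ioi, closure_univ]
  have hfrontier : frontier (Ioi (0 : ℝ) ×ˢ (univ : Set (ℝ × ℝ))) = {0} ×ˢ univ := by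
    rw [frontier_prod_univ_eq, frontier_Ioi]
  refine nonpos_of_proper_supersolution (p := p) (q := q) (a := a) (U := Ioi 0 ×ˢ univ)
    (Φ := solBarrier p q a l A) (isOpen_Ioi.prod isOpen_univ) ?_
    (fun v hv => contDiffAt_solBarrier hl.le (le_of_lt hv.1))
    (fun v hv => solLap_solBarrier_neg hp ha hl.le hl₂ hA₂ (le_of_lt hv.1)) ?_ ?_
    hu.continuous.continuousOn (fun v _ => hu.contDiffAt) (fun v _ => hlap v) ?_
    (fun v _ => hB v) ⟨hw, mem_univ _⟩
  · rw [hclosure]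
    exact fun v hv => (contDiffAt_solBarrier hl.le hv.1).continuousAt.continuousWithinAt
  · rw [hfrontier]
    exact fun v hv => solBarrier_nonneg hp ha hl.le hA.le (ge_of_eq hv.1)
  · rw [hclosure]
    exact tendsto_solBarrier_cocompact hp ha hl hA
  · rw [hfrontier]
    rintro ⟨x, v⟩ ⟨rfl, -⟩
    exact hbdry v

/-- Bounded `C²` functions harmonic for the Laplacian with vertical drift `a` on `Sol(p,q)`. -/
structure IsBoundedSolHarmonic (p q a : ℝ) (h : ℝ × ℝ × ℝ → ℝ) : Prop where
  contDiff : ContDiff ℝ 2 h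
  bounded : ∃ C, ∀ w, |h w| ≤ C
  solLap_eq_zero : ∀ w, solLap p q a h w = 0

namespace IsBoundedSolHarmonic

variable {p q a : ℝ} {h : ℝ × ℝ × ℝ → ℝ}

lemma comp_const_add_fst (hh : IsBoundedSolHarmonic p q a h) (m : ℝ) :
    IsBoundedSolHarmonic p q a fun w => h (m + w.1, w.2) where
  contDiff := hh.contDiff.comp (by fun_prop)
  bounded := hh.bounded.imp fun _ hC w => hC _
  solLap_eq_zero w := by rw [solLap_comp_const_add_fst, hh.solLap_eq_zero]

lemma comp_neg_fst (hh : IsBoundedSolHarmonic p q a h) :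
    IsBoundedSolHarmonic p q a fun w => h (-w.1, w.2) where
  contDiff := hh.contDiff.comp (by fun_prop)
  bounded := hh.bounded.imp fun _ hC w => hC _
  solLap_eq_zero w := by rw [solLap_comp_neg_fst, hh.solLap_eq_zero]

lemma comp_swap (hh : IsBoundedSolHarmonic p q a h) :
    IsBoundedSolHarmonic q p (-a) fun w => h (w.2.1, w.1, -w.2.2) where
  contDiff := hh.contDiff.comp (by fun_prop)
  bounded := hh.bounded.imp fun _ hC w => hC _
  solLap_eq_zero w := by rw [solLap_comp_swap, hh.solLap_eq_zero]

lemma le_neg_fst (hh : IsBoundedSolHarmonic p q a h) (hp : 0 < p) (ha : 0 < a) {x : ℝ}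
    (hx : 0 < x) (v : ℝ × ℝ) : h (x, v) ≤ h (-x, v) := by
  obtain ⟨C, hC⟩ := hh.bounded
  have hneg := hh.comp_neg_fst
  refine sub_nonpos.1 (nonpos_of_solLap_nonneg_of_halfSpace (q := q)
    (u := fun w => h w - h (-w.1, w.2)) hp ha (hh.contDiff.sub hneg.contDiff) (fun w => ?_)
    (fun v => by simp only [neg_zero, sub_self, le_refl]) (B := C + C) (fun w => ?_) hx)
  · rw [solLap_sub hh.contDiff.contDiffAt hneg.contDiff.contDiffAt, hh.solLap_eq_zero,
      hneg.solLap_eq_zero, sub_zero]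
  · linarith [le_of_abs_le (hC w), neg_le_of_abs_le (hC (-w.1, w.2))]

lemma neg_fst_eq (hh : IsBoundedSolHarmonic p q a h) (hp : 0 < p) (ha : 0 < a) (x : ℝ)
    (v : ℝ × ℝ) : h (-x, v) = h (x, v) := by
  have heven {t : ℝ} (ht : 0 < t) : h (-t, v) = h (t, v) := by
    refine le_antisymm ?_ (hh.le_neg_fst hp ha ht v)
    simpa only [neg_neg] using hh.comp_neg_fst.le_neg_fst hp ha ht v
  rcases lt_trichotomy x 0 with hx | rfl | hx
  · simpa only [neg_neg] using (heven (neg_pos.2 hx)).symm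
  · rw [neg_zero]
  · exact heven hx

lemma eq_of_snd_eq (hh : IsBoundedSolHarmonic p q a h) (hp : 0 < p) (ha : 0 < a) (x x' : ℝ)
    (v : ℝ × ℝ) : h (x, v) = h (x', v) := by
  have hsymm := (hh.comp_const_add_fst ((x + x') / 2)).neg_fst_eq hp ha ((x' - x) / 2) v
  convert hsymm using 3 <;> ring

lemma exists_hypHarmonic (hh : IsBoundedSolHarmonic p q a h) (hp : 0 < p) (ha : 0 < a) :
    ∃ h₂ : ℝ × ℝ → ℝ, ContDiff ℝ 2 h₂ ∧ (∃ C : ℝ, ∀ u, |h₂ u| ≤ C) ∧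
      (∀ u, hypLap q (-a) h₂ u = 0) ∧ ∀ w : ℝ × ℝ × ℝ, h w = h₂ (w.2.1, -w.2.2) := by
  refine ⟨fun u => h (0, u.1, -u.2), hh.contDiff.comp (by fun_prop),
    hh.bounded.imp fun C hC u => hC _, fun u => ?_, fun w => ?_⟩
  · have hconst : (fun t => h (t, u.1, -u.2)) = fun _ => h (0, u.1, -u.2) :=
      funext fun t => hh.eq_of_snd_eq hp ha t 0 _
    have hxx : iteratedDeriv 2 (fun t => h (t, u.1, -u.2)) 0 = 0 := by
      rw [hconst, iteratedDeriv_const, if_neg two_ne_zero]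
    rw [hypLap_slice (p := p) hxx, hh.solLap_eq_zero]
  · simpa only [neg_neg] using hh.eq_of_snd_eq hp ha w.1 0 w.2

end IsBoundedSolHarmonic

theorem bounded_harmonic_structure_general (p q a : ℝ) :
    (0 < p → 0 < a →
      ∀ h : ℝ × ℝ × ℝ → ℝ, ContDiff ℝ 2 h → (∃ C : ℝ, ∀ w, |h w| ≤ C) →
        (∀ w, solLap p q a h w = 0) →
        ∃ h₂ : ℝ × ℝ → ℝ, ContDiff ℝ 2 h₂ ∧ (∃ C : ℝ, ∀ u, |h₂ u| ≤ C) ∧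
          (∀ u, hypLap q (-a) h₂ u = 0) ∧ ∀ w : ℝ × ℝ × ℝ, h w = h₂ (w.2.1, -w.2.2))
    ∧
    (0 < q → a < 0 →
      ∀ h : ℝ × ℝ × ℝ → ℝ, ContDiff ℝ 2 h → (∃ C : ℝ, ∀ w, |h w| ≤ C) →
        (∀ w, solLap p q a h w = 0) →
        ∃ h₁ : ℝ × ℝ → ℝ, ContDiff ℝ 2 h₁ ∧ (∃ C : ℝ, ∀ u, |h₁ u| ≤ C) ∧
          (∀ u, hypLap p a h₁ u = 0) ∧ ∀ w : ℝ × ℝ × ℝ, h w = h₁ (w.1, w.2.2)) := by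
  refine ⟨fun hp ha h hd hb hlap => (IsBoundedSolHarmonic.mk hd hb hlap).exists_hypHarmonic hp ha,
    fun hq ha h hd hb hlap => ?_⟩
  obtain ⟨h₁, hd₁, hb₁, hlap₁, heq⟩ :=
    (IsBoundedSolHarmonic.mk hd hb hlap).comp_swap.exists_hypHarmonic hq (neg_pos.2 ha)
  rw [neg_neg] at hlap₁
  exact ⟨h₁, hd₁, hb₁, hlap₁, fun w => by simpa only [neg_neg] using heq (w.2.1, w.1, -w.2.2)⟩

theorem bounded_harmonic_structure (p q a : ℝ) (hp : 0 < p) (hq : 0 < q) :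
    (0 < a →
      ∀ h : ℝ × ℝ × ℝ → ℝ, ContDiff ℝ 2 h → (∃ C : ℝ, ∀ w, |h w| ≤ C) →
        (∀ w, solLap p q a h w = 0) →
        ∃ h₂ : ℝ × ℝ → ℝ, ContDiff ℝ 2 h₂ ∧ (∃ C : ℝ, ∀ u, |h₂ u| ≤ C) ∧
          (∀ u, hypLap q (-a) h₂ u = 0) ∧ ∀ w : ℝ × ℝ × ℝ, h w = h₂ (w.2.1, -w.2.2))
    ∧
    (a < 0 →
      ∀ h : ℝ × ℝ × ℝ → ℝ, ContDiff ℝ 2 h → (∃ C : ℝ, ∀ w, |h w| ≤ C) →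
        (∀ w, solLap p q a h w = 0) →
        ∃ h₁ : ℝ × ℝ → ℝ, ContDiff ℝ 2 h₁ ∧ (∃ C : ℝ, ∀ u, |h₁ u| ≤ C) ∧
          (∀ u, hypLap p a h₁ u = 0) ∧ ∀ w : ℝ × ℝ × ℝ, h w = h₁ (w.1, w.2.2)) :=
  have h := bounded_harmonic_structure_general p q a
  ⟨h.1 hp, h.2 hq⟩
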